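/- Let A = Λ_K(Y₁,…,Yₛ) be the exterior algebra over a field K and f a nonzero element of the augmentation ideal whose basement consists of sets L₁,…,L_t with pairwise empty intersections (so ind(f) = t) and each |Lᵢ| ≥ t. Then max{|L| : Y^L ∉ Af} = s − t, i.e., Ksdim₁(A/Af) = s − t. -/

import Mathlib

open ExteriorAlgebra

/-- The monomial `Y^L = ∏_{i ∈ L} Yᵢ` in the exterior algebra `Λ_K(Y₁,…,Yₛ)`,
the product being taken in increasing order of indices. -/
noncomputable def Ymon (K : Type*) [Field K] (s : ℕ) (L : Finset (Fin s)) :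
    ExteriorAlgebra K (Fin s → K) :=
  ((L.sort (· ≤ ·)).map (fun i => ι K (Pi.single i (1 : K)))).prod

/-- The two-sided ideal `AfA` generated by `f`. -/
def idealOf {A : Type*} [Ring A] (f : A) : Ideal A :=
  Ideal.span {x : A | ∃ a b : A, x = a * f * b}

/-- `L` belongs to the basement of `f = Σ c_L Y^L`: it is a minimal element of
`Exp(f) = {L | c_L ≠ 0}`. -/
def InBasement {K : Type*} [Field K] {s : ℕ}
    (c : Finset (Fin s) → K) (L : Finset (Fin s)) : Prop :=
  c L ≠ 0 ∧ ∀ L', c L' ≠ 0 → L' ⊆ L → L' = L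

/-! Multiplication by a monomial `Y^T` moves past every element of the exterior algebra up to
changing that element, so if `Y^T f = 0` then `Y^T` annihilates the two-sided ideal `(f)`. This
happens as soon as `T` meets every set of the basement, and then `Y^L ∉ (f)` for each `L` disjoint
from `T`, because `Y^T Y^L = ± Y^(T ∪ L) ≠ 0`. Choosing one point in each basement set gives such a
`T` with `t` elements.

Conversely, if `Lᶜ` has fewer than `t` elements, it misses some basement set `B`, so `B ⊆ L`. In
`Y^(L \ B) f` the term of `B` is a unit multiple of `Y^L`. Any other surviving exponent `L'`
contains a basement set `B'`; were `B' ≠ B`, disjointness would force `B' ⊆ Lᶜ`, which is too small.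
Hence `B ⊂ L'`, the term of `L'` is a multiple of `Y^(L ∪ L')` with `L ⊂ L ∪ L'`, and induction on
`Lᶜ` finishes. -/

open Module Set.powersetCard
open scoped Finset

section Transversal

variable {α : Type*} {𝓑 : Finset (Finset α)} {T : Finset α}

theorem card_le_card_of_pairwiseDisjoint_of_not_disjoint
    (hdisj : (𝓑 : Set (Finset α)).PairwiseDisjoint id) (hT : ∀ B ∈ 𝓑, ¬Disjoint T B) :
    #𝓑 ≤ #T := by
  refine Finset.card_le_card_of_forall_subsingleton (fun B x ↦ x ∈ B)
    (fun B hB ↦ Finset.not_disjoint_iff.mp (hT B hB)) ?_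
  rintro x - B ⟨hB, hxB⟩ B' ⟨hB', hxB'⟩
  exact hdisj.elim_finset hB hB' x hxB hxB'

theorem exists_card_le_forall_not_disjoint (hne : ∀ B ∈ 𝓑, B.Nonempty) :
    ∃ T : Finset α, #T ≤ #𝓑 ∧ ∀ B ∈ 𝓑, ¬Disjoint T B := by
  classical
  choose g hg using fun B : 𝓑 ↦ hne B B.2
  refine ⟨𝓑.attach.image g, ?_, fun B hB ↦ ?_⟩
  · simpa using Finset.card_image_le (s := 𝓑.attach) (f := g)
  · exact Finset.not_disjoint_iff.mpr
      ⟨g ⟨B, hB⟩, Finset.mem_image_of_mem g (Finset.mem_attach 𝓑 ⟨B, hB⟩), hg ⟨B, hB⟩⟩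

theorem exists_card_eq_forall_not_disjoint
    (hdisj : (𝓑 : Set (Finset α)).PairwiseDisjoint id) (hne : ∀ B ∈ 𝓑, B.Nonempty) :
    ∃ T : Finset α, #T = #𝓑 ∧ ∀ B ∈ 𝓑, ¬Disjoint T B := by
  obtain ⟨T, hcard, hT⟩ := exists_card_le_forall_not_disjoint hne
  exact ⟨T, hcard.antisymm (card_le_card_of_pairwiseDisjoint_of_not_disjoint hdisj hT), hT⟩

end Transversal

section IdealOf

variable {A : Type*} [Ring A] {a f x : A}

theorem mul_mem_idealOf (a f : A) : a * f ∈ idealOf f :=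
  Ideal.subset_span ⟨a, 1, (mul_one _).symm⟩

theorem mul_eq_zero_of_mem_idealOf (ha : ∀ y, ∃ z, a * y = z * a) (haf : a * f = 0)
    (hx : x ∈ idealOf f) : a * x = 0 := by
  induction hx using Submodule.span_induction with
  | mem x hx =>
    obtain ⟨y, z, rfl⟩ := hx
    obtain ⟨y', hy'⟩ := ha y
    rw [← mul_assoc, ← mul_assoc, hy', mul_assoc y', haf, mul_zero, zero_mul]
  | zero => exact mul_zero a
  | add x y _ _ hx hy => rw [mul_add, hx, hy, add_zero]
  | smul y x _ hx =>
    obtain ⟨y', hy'⟩ := ha y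
    rw [smul_eq_mul, ← mul_assoc, hy', mul_assoc, hx, mul_zero]

end IdealOf

section Monomials

variable {I R M : Type*} [LinearOrder I] [CommRing R] [AddCommGroup M] [Module R M]
  (b : Basis I R M) {A B L T : Finset I} {f : ExteriorAlgebra R M}

theorem exteriorBasis_mul_of_not_disjoint (h : ¬Disjoint A B) :
    b.ExteriorAlgebra A * b.ExteriorAlgebra B = 0 :=
  basis_mul_of_not_disjoint b (ofCard rfl) (ofCard rfl) h

theorem exists_exteriorBasis_mul_eq_smul (h : Disjoint A B) :
    ∃ ε : ℤˣ, b.ExteriorAlgebra A * b.ExteriorAlgebra B = ε • b.ExteriorAlgebra (A ∪ B) := by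
  refine ⟨(permOfDisjoint (s := ofCard rfl) (t := ofCard rfl) h).sign, ?_⟩
  rw [← Finset.disjUnion_eq_union A B h]
  exact basis_mul_of_disjoint b (ofCard rfl) (ofCard rfl) h

theorem exteriorBasis_mul_mem_iff (h : Disjoint A B) (J : Ideal (ExteriorAlgebra R M)) :
    b.ExteriorAlgebra A * b.ExteriorAlgebra B ∈ J ↔ b.ExteriorAlgebra (A ∪ B) ∈ J := by
  obtain ⟨ε, hε⟩ := exists_exteriorBasis_mul_eq_smul b h
  rw [hε, Submodule.smul_mem_iff']

theorem exists_exteriorBasis_mul_eq_mul (A : Finset I) (x : ExteriorAlgebra R M) :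
    ∃ y, b.ExteriorAlgebra A * x = y * b.ExteriorAlgebra A := by
  induction b.ExteriorAlgebra.mem_span x using Submodule.span_induction with
  | mem x hx =>
    obtain ⟨L, rfl⟩ := hx
    by_cases h : Disjoint A L
    · obtain ⟨ε, hε⟩ := exists_exteriorBasis_mul_eq_smul b h
      obtain ⟨δ, hδ⟩ := exists_exteriorBasis_mul_eq_smul b h.symm
      refine ⟨(ε * δ⁻¹) • b.ExteriorAlgebra L, ?_⟩
      rw [hε, smul_mul_assoc, hδ, smul_smul, inv_mul_cancel_right, Finset.union_comm]
    · exact ⟨0, by rw [exteriorBasis_mul_of_not_disjoint b h, zero_mul]⟩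
  | zero => exact ⟨0, by rw [mul_zero, zero_mul]⟩
  | add x x' _ _ hx hx' =>
    obtain ⟨y, hy⟩ := hx
    obtain ⟨y', hy'⟩ := hx'
    exact ⟨y + y', by rw [mul_add, hy, hy', add_mul]⟩
  | smul r x _ hx =>
    obtain ⟨y, hy⟩ := hx
    exact ⟨r • y, by rw [mul_smul_comm, hy, smul_mul_assoc]⟩

theorem exteriorBasis_mul_eq_zero_of_forall_not_disjoint
    (h : ∀ L, b.ExteriorAlgebra.repr f L ≠ 0 → ¬Disjoint T L) : b.ExteriorAlgebra T * f = 0 := by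
  rw [← b.ExteriorAlgebra.linearCombination_repr f, Finsupp.linearCombination_apply,
    Finsupp.sum, Finset.mul_sum]
  refine Finset.sum_eq_zero fun L hL ↦ ?_
  rw [mul_smul_comm,
    exteriorBasis_mul_of_not_disjoint b (h L (Finsupp.mem_support_iff.mp hL)), smul_zero]

open Classical in
/-- The basement of `f`: the minimal exponents of the expansion of `f` in the monomials attached to
the basis `b`. It is a `Finset` because `f` has finitely many exponents, even if `I` is infinite. -/
noncomputable def basement (f : ExteriorAlgebra R M) : Finset (Finset I) :=
  {L ∈ (b.ExteriorAlgebra.repr f).support | Minimal (b.ExteriorAlgebra.repr f · ≠ 0) L}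

theorem mem_basement : L ∈ basement b f ↔ Minimal (b.ExteriorAlgebra.repr f · ≠ 0) L := by
  simpa [basement] using fun h : Minimal _ L ↦ h.prop

theorem exists_mem_basement_subset (hL : b.ExteriorAlgebra.repr f L ≠ 0) :
    ∃ B ∈ basement b f, B ⊆ L := by
  obtain ⟨B, hBL, hB⟩ := exists_minimal_le_of_wellFoundedLT
    (b.ExteriorAlgebra.repr f · ≠ 0) L hL
  exact ⟨B, (mem_basement b).mpr hB, hBL⟩

theorem exteriorBasis_notMem_idealOf [Nontrivial R] (hT : ∀ B ∈ basement b f, ¬Disjoint T B)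
    (hTL : Disjoint T L) : b.ExteriorAlgebra L ∉ idealOf f := by
  intro hmem
  have hTf : b.ExteriorAlgebra T * f = 0 := by
    refine exteriorBasis_mul_eq_zero_of_forall_not_disjoint b fun L' hL' hdisj ↦ ?_
    obtain ⟨B, hB, hBL'⟩ := exists_mem_basement_subset b hL'
    exact hT B hB (hdisj.mono_right hBL')
  have hzero := mul_eq_zero_of_mem_idealOf (exists_exteriorBasis_mul_eq_mul b T) hTf hmem
  obtain ⟨ε, hε⟩ := exists_exteriorBasis_mul_eq_smul b hTL
  rw [hε, smul_eq_zero_iff_eq] at hzero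
  exact b.ExteriorAlgebra.ne_zero _ hzero

theorem exteriorBasis_mem_idealOf [Finite I] (hunit : IsUnit (b.ExteriorAlgebra.repr f B))
    (hBL : B ⊆ L)
    (hB : ∀ L', b.ExteriorAlgebra.repr f L' ≠ 0 → Disjoint (L \ B) L' → B ⊆ L') :
    b.ExteriorAlgebra L ∈ idealOf f := by
  cases nonempty_fintype I
  induction L using WellFoundedGT.induction with
  | ind L ih =>
  have hother : ∀ L' ∈ Finset.univ.erase B, b.ExteriorAlgebra (L \ B) *
      (b.ExteriorAlgebra.repr f L' • b.ExteriorAlgebra L') ∈ idealOf f := by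
    intro L' hL'
    rw [mul_smul_comm]
    by_cases hc : b.ExteriorAlgebra.repr f L' = 0
    · rw [hc, zero_smul]
      exact zero_mem _
    refine Submodule.smul_of_tower_mem _ _ ?_
    by_cases hd : Disjoint (L \ B) L'
    · have hBL' : B ⊂ L' := (hB L' hc hd).ssubset_of_ne (Finset.ne_of_mem_erase hL').symm
      have hunion : L \ B ∪ L' = L ∪ L' := by grind
      obtain ⟨x, hxL', hxB⟩ := Finset.exists_of_ssubset hBL'
      have hxL : x ∉ L := fun hxL ↦
        Finset.disjoint_left.mp hd (Finset.mem_sdiff.mpr ⟨hxL, hxB⟩) hxL'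
      have hL_lt : L < L ∪ L' := by grind
      rw [exteriorBasis_mul_mem_iff b hd, hunion]
      exact ih _ hL_lt (hBL.trans hL_lt.le) fun L'' hc' hd' ↦
        hB L'' hc' (hd'.mono_left (Finset.sdiff_subset_sdiff hL_lt.le le_rfl))
    · rw [exteriorBasis_mul_of_not_disjoint b hd]
      exact zero_mem _
  have hmem := mul_mem_idealOf (b.ExteriorAlgebra (L \ B)) f
  nth_rw 2 [← b.ExteriorAlgebra.sum_repr f] at hmem
  rw [Finset.mul_sum, ← Finset.add_sum_erase _ _ (Finset.mem_univ B),
    Submodule.add_mem_iff_left _ (Submodule.sum_mem _ hother), mul_smul_comm] at hmem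
  obtain ⟨u, hu⟩ := hunit
  rwa [← hu, ← Units.smul_def, Submodule.smul_mem_iff',
    exteriorBasis_mul_mem_iff b Finset.sdiff_disjoint, Finset.sdiff_union_of_subset hBL] at hmem

theorem exteriorBasis_mem_idealOf_of_card_compl_lt [Fintype I]
    (hunit : ∀ B ∈ basement b f, IsUnit (b.ExteriorAlgebra.repr f B))
    (hdisj : (basement b f : Set (Finset I)).PairwiseDisjoint id)
    (hcard : ∀ B ∈ basement b f, #Lᶜ < #B) (hL : #Lᶜ < #(basement b f)) :
    b.ExteriorAlgebra L ∈ idealOf f := by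
  obtain ⟨B, hB, hBL⟩ : ∃ B ∈ basement b f, Disjoint Lᶜ B := by
    by_contra! h
    exact hL.not_ge (card_le_card_of_pairwiseDisjoint_of_not_disjoint hdisj h)
  refine exteriorBasis_mem_idealOf b (hunit B hB) (disjoint_compl_left_iff.mp hBL)
    fun L' hL' hd ↦ ?_
  obtain ⟨B', hB', hB'L'⟩ := exists_mem_basement_subset b hL'
  suffices B' = B from this ▸ hB'L'
  by_contra hne
  have hB'L : Disjoint L B' := by
    rw [← Finset.sdiff_union_of_subset (disjoint_compl_left_iff.mp hBL), Finset.disjoint_union_left]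
    exact ⟨hd.mono_right hB'L', (hdisj hB' hB hne).symm⟩
  exact (hcard B' hB').not_ge (Finset.card_le_card (Finset.subset_compl_iff_disjoint_left.mpr hB'L))

theorem odd_dim_one_relation_worst_case_general [Fintype I] [Nontrivial R]
    (f : ExteriorAlgebra R M)
    (hunit : ∀ B ∈ basement b f, IsUnit (b.ExteriorAlgebra.repr f B))
    (hdisj : (basement b f : Set (Finset I)).PairwiseDisjoint id)
    (hbig : ∀ B ∈ basement b f, #(basement b f) ≤ #B) :
    IsGreatest {n | ∃ L : Finset I, #L = n ∧ b.ExteriorAlgebra L ∉ idealOf f}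
      (Fintype.card I - #(basement b f)) := by
  have hne : ∀ B ∈ basement b f, B.Nonempty := fun B hB ↦
    Finset.card_pos.mp ((Finset.card_pos.mpr ⟨B, hB⟩).trans_le (hbig B hB))
  constructor
  · obtain ⟨T, hcard, hT⟩ := exists_card_eq_forall_not_disjoint hdisj hne
    exact ⟨Tᶜ, by rw [Finset.card_compl, hcard],
      exteriorBasis_notMem_idealOf b hT disjoint_compl_right⟩
  · rintro _ ⟨L, rfl, hL⟩
    contrapose! hL
    have hlt : #Lᶜ < #(basement b f) := by
      have := L.card_le_univ
      rw [Finset.card_compl]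
      lia
    exact exteriorBasis_mem_idealOf_of_card_compl_lt b hunit hdisj
      (fun B hB ↦ hlt.trans_le (hbig B hB)) hlt

end Monomials

section Coordinates

variable {K : Type*} [Field K] {s : ℕ}

theorem Ymon_eq_exteriorBasis (L : Finset (Fin s)) :
    Ymon K s L = (Pi.basisFun K (Fin s)).ExteriorAlgebra L := by
  have hmulti : (Pi.basisFun K (Fin s)).ExteriorAlgebra L =
      ιMulti K #L (Pi.basisFun K (Fin s) ∘ L.orderEmbOfFin rfl) :=
    basis_apply_ofCard _ rfl
  rw [hmulti, ιMulti_apply, Ymon]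
  congr 1
  apply List.ext_getElem <;> simp [Finset.orderEmbOfFin_apply]

theorem repr_sum_smul_Ymon (c : Finset (Fin s) → K) :
    ⇑((Pi.basisFun K (Fin s)).ExteriorAlgebra.repr (∑ L, c L • Ymon K s L)) = c := by
  simp only [Ymon_eq_exteriorBasis]
  exact Basis.repr_sum_self _ c

theorem mem_basement_sum_smul_Ymon (c : Finset (Fin s) → K) (L : Finset (Fin s)) :
    L ∈ basement (Pi.basisFun K (Fin s)) (∑ L, c L • Ymon K s L) ↔ InBasement c L := by
  rw [mem_basement, repr_sum_smul_Ymon, minimal_iff, InBasement]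
  simp only [eq_comm]

theorem ncard_setOf_inBasement (c : Finset (Fin s) → K) :
    {L | InBasement c L}.ncard = #(basement (Pi.basisFun K (Fin s)) (∑ L, c L • Ymon K s L)) := by
  rw [← Set.ncard_coe_finset]
  exact congrArg Set.ncard (Set.ext fun L ↦ (mem_basement_sum_smul_Ymon c L).symm)

theorem isUnit_repr_of_mem_basement {I M : Type*} [LinearOrder I] [AddCommGroup M] [Module K M]
    (b : Basis I K M) {f : ExteriorAlgebra K M} {B : Finset I} (hB : B ∈ basement b f) :
    IsUnit (b.ExteriorAlgebra.repr f B) :=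
  ((mem_basement b).mp hB).prop.isUnit

end Coordinates

/-- Let `f = Σ_L c_L Y^L ∈ Λ_K(Y₁,…,Yₛ)` be nonzero with
`c_∅ = 0`, whose basement consists of `t` pairwise disjoint sets, each of
cardinality at least `t` (so `ind(f) = t`).  Then
`Ksdim₁(A/Af) = max{|L| : Y^L ∉ Af} = s - t`. -/
theorem odd_dim_one_relation_worst_case
    {K : Type*} [Field K] (s : ℕ) (c : Finset (Fin s) → K) (hc0 : c ∅ = 0)
    (f : ExteriorAlgebra K (Fin s → K))
    (hf : f = ∑ L : Finset (Fin s), c L • Ymon K s L) (hfne : f ≠ 0)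
    (t : ℕ) (hcard : {L : Finset (Fin s) | InBasement c L}.ncard = t)
    (hdisj : ∀ L L' : Finset (Fin s), InBasement c L → InBasement c L' →
      L ≠ L' → L ∩ L' = ∅)
    (hbig : ∀ L : Finset (Fin s), InBasement c L → t ≤ L.card) :
    sSup {n : ℕ | ∃ L : Finset (Fin s),
      L.card = n ∧ Ymon K s L ∉ idealOf f} = s - t := by
  subst hf hcard
  have hmem := mem_basement_sum_smul_Ymon c
  rw [ncard_setOf_inBasement] at hbig ⊢
  simp only [← hmem] at hdisj hbig
  have hgreatest := odd_dim_one_relation_worst_case_general (Pi.basisFun K (Fin s)) _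
    (fun _ ↦ isUnit_repr_of_mem_basement _)
    (fun B hB B' hB' hne ↦ Finset.disjoint_iff_inter_eq_empty.mpr (hdisj B B' hB hB' hne)) hbig
  simpa only [Fintype.card_fin, Ymon_eq_exteriorBasis] using hgreatest.csSup_eq
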